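/- Let 𝔸 be a layered Heyting algebra, Pr(𝔸) its set of prime filters ordered by inclusion with ternary relation R F₀ F₁ F₂ iff ∀ a ∈ F₀, b ∈ F₁: a ▸ b ∈ F₂. The map h(a) = {F ∈ Pr(𝔸) | a ∈ F} satisfies h(a ▸ b) = h(a) ▸_R h(b), where h(a) ▸_R h(b) = {F | ∃ F', G, H: F' ⊆ F, R G H F', G ∈ h(a), H ∈ h(b)}. -/

import Mathlib

/-- A layered Heyting algebra: a Heyting algebra equipped with binary operations
`lay` (▸), `limp` (-▸) and `rimp` (▸-) satisfying the residuation law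
`a ▸ b ≤ c ↔ a ≤ b -▸ c ↔ b ≤ a ▸- c`. -/
class LayeredHeytingAlgebra (A : Type*) extends HeytingAlgebra A where
  lay : A → A → A
  limp : A → A → A
  rimp : A → A → A
  lay_le_iff_limp : ∀ a b c : A, lay a b ≤ c ↔ a ≤ limp b c
  lay_le_iff_rimp : ∀ a b c : A, lay a b ≤ c ↔ b ≤ rimp a c

open LayeredHeytingAlgebra

/-- A prime filter of the underlying lattice of a layered Heyting algebra. -/
def IsPrimeFilter {A : Type*} [LayeredHeytingAlgebra A] (F : Set A) : Prop :=
  F.Nonempty ∧ (∀ ⦃a b : A⦄, a ∈ F → a ≤ b → b ∈ F) ∧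
    (∀ ⦃a b : A⦄, a ∈ F → b ∈ F → a ⊓ b ∈ F) ∧ (⊥ : A) ∉ F ∧
    ∀ a b : A, a ⊔ b ∈ F → a ∈ F ∨ b ∈ F

/-- The set of prime filters of `A`. -/
def PF (A : Type*) [LayeredHeytingAlgebra A] : Type _ :=
  {F : Set A // IsPrimeFilter F}

/-- The ternary relation on prime filters: `R F₀ F₁ F₂` iff for all `a ∈ F₀`
and `b ∈ F₁`, `a ▸ b ∈ F₂`. -/
def Rpf {A : Type*} [LayeredHeytingAlgebra A] (F₀ F₁ F₂ : PF A) : Prop :=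
  ∀ a ∈ F₀.val, ∀ b ∈ F₁.val, lay a b ∈ F₂.val

/-- The representation map `h(a) = {F | a ∈ F}`. -/
def hrep {A : Type*} [LayeredHeytingAlgebra A] (a : A) : Set (PF A) :=
  {F : PF A | a ∈ F.val}

/-!
Residuation makes `lay` preserve finite joins in each argument, and only this is needed. If filters
`G`, `H` and a prime filter `F` satisfy `f x y ∈ F` for all `x ∈ G`, `y ∈ H`, then
`{y | ∃ x ∈ G, f x y ∉ F}` is an ideal disjoint from `H`, so the prime ideal theorem enlarges `H`
to a prime filter without losing the inclusion. Doing this once in each argument, starting from the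
principal filters of `a` and `b`, turns `f a b ∈ F` into prime filters `G ∋ a` and `H ∋ b`.
-/

open Order

/-- A binary operator in the sense of Jónsson and Tarski: a map that preserves finite joins,
including the empty one, in each argument separately. -/
structure IsBinaryOperator {α β γ : Type*} [SemilatticeSup α] [OrderBot α] [SemilatticeSup β]
    [OrderBot β] [SemilatticeSup γ] [OrderBot γ] (f : α → β → γ) : Prop where
  bot_left : ∀ y, f ⊥ y = ⊥
  bot_right : ∀ x, f x ⊥ = ⊥
  sup_left : ∀ x x' y, f (x ⊔ x') y = f x y ⊔ f x' y
  sup_right : ∀ x y y', f x (y ⊔ y') = f x y ⊔ f x y'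

/-- The prime filters of a preorder, as bundled Mathlib filters. These replace `PF`, which is
available only for layered Heyting algebras. -/
abbrev PrimePFilter (α : Type*) [Preorder α] : Type _ :=
  {F : PFilter α // F.IsPrime}

namespace PrimePFilter

theorem bot_notMem {α : Type*} [Preorder α] [OrderBot α] (F : PrimePFilter α) : ⊥ ∉ F.1 :=
  F.2.toPrimePair.I.bot_mem

theorem mem_or_mem {α : Type*} [SemilatticeSup α] (F : PrimePFilter α) {x y : α}
    (hxy : x ⊔ y ∈ F.1) : x ∈ F.1 ∨ y ∈ F.1 := by
  by_contra! h
  exact Ideal.sup_mem (s := F.2.toPrimePair.I) h.1 h.2 hxy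

theorem exists_le_disjoint {α : Type*} [DistribLattice α] {G : PFilter α} {I : Ideal α}
    (hGI : Disjoint (G : Set α) I) : ∃ H : PrimePFilter α, G ≤ H.1 ∧ Disjoint (H.1 : Set α) I := by
  obtain ⟨J, hJ, hIJ, hGJ⟩ := DistribLattice.prime_ideal_of_disjoint_filter_ideal hGI
  exact ⟨⟨hJ.toPrimePair.F, hJ.toPrimePair.F_isPrime⟩, hGJ.subset_compl_right,
    hJ.toPrimePair.disjoint.symm.mono_right hIJ⟩

end PrimePFilter

namespace IsBinaryOperator

section SemilatticeSup

variable {α β γ : Type*} [SemilatticeSup α] [OrderBot α] [SemilatticeSup β] [OrderBot β]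
  [SemilatticeSup γ] [OrderBot γ] {f : α → β → γ}

theorem of_galoisConnection {g : β → γ → α} {h : α → γ → β}
    (hg : ∀ y, GaloisConnection (f · y) (g y)) (hh : ∀ x, GaloisConnection (f x) (h x)) :
    IsBinaryOperator f where
  bot_left y := (hg y).l_bot
  bot_right x := (hh x).l_bot
  sup_left _ _ y := (hg y).l_sup
  sup_right x _ _ := (hh x).l_sup

theorem flip (hf : IsBinaryOperator f) : IsBinaryOperator (flip f) where
  bot_left := hf.bot_right
  bot_right := hf.bot_left
  sup_left x x' y := hf.sup_right y x x'
  sup_right x y y' := hf.sup_left y y' x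

theorem monotone_left (hf : IsBinaryOperator f) (y : β) : Monotone (f · y) := fun x x' hx => by
  rw [← sup_eq_right, ← hf.sup_left, sup_eq_right.2 hx]

theorem monotone_right (hf : IsBinaryOperator f) (x : α) : Monotone (f x) :=
  hf.flip.monotone_left x

theorem isIdeal_exists_notMem (hf : IsBinaryOperator f) (G : PFilter α) (F : PrimePFilter γ) :
    IsIdeal {y | ∃ x ∈ G, f x y ∉ F.1} where
  IsLowerSet := by
    rintro y y' hy ⟨x, hx, hxy⟩
    exact ⟨x, hx, fun hxy' => hxy (PFilter.mem_of_le (hf.monotone_right x hy) hxy')⟩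
  Nonempty := by
    obtain ⟨x, hx⟩ := G.nonempty
    exact ⟨⊥, x, hx, by simpa only [hf.bot_right] using F.bot_notMem⟩
  Directed := by
    rintro y ⟨x, hx, hxy⟩ y' ⟨x', hx', hxy'⟩
    obtain ⟨z, hz, hzx, hzx'⟩ := G.directed x hx x' hx'
    refine ⟨y ⊔ y', ⟨z, hz, fun hzyy' => ?_⟩, le_sup_left, le_sup_right⟩
    rw [hf.sup_right] at hzyy'
    rcases F.mem_or_mem hzyy' with hzy | hzy'
    · exact hxy (PFilter.mem_of_le (hf.monotone_left y hzx) hzy)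
    · exact hxy' (PFilter.mem_of_le (hf.monotone_left y' hzx') hzy')

end SemilatticeSup

theorem exists_primePFilter_ge_right {α β γ : Type*} [SemilatticeSup α] [OrderBot α]
    [DistribLattice β] [OrderBot β] [SemilatticeSup γ] [OrderBot γ] {f : α → β → γ}
    (hf : IsBinaryOperator f) {G : PFilter α} {H : PFilter β} {F : PrimePFilter γ}
    (hGH : ∀ x ∈ G, ∀ y ∈ H, f x y ∈ F.1) :
    ∃ H' : PrimePFilter β, H ≤ H'.1 ∧ ∀ x ∈ G, ∀ y ∈ H'.1, f x y ∈ F.1 := by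
  have disjoint_ideal : Disjoint (H : Set β) (hf.isIdeal_exists_notMem G F).toIdeal :=
    Set.disjoint_left.2 fun y hy ⟨x, hx, hxy⟩ => hxy (hGH x hx y hy)
  obtain ⟨H', hHH', hH'⟩ := PrimePFilter.exists_le_disjoint disjoint_ideal
  exact ⟨H', hHH', fun x hx y hy => by_contra fun hxy => Set.disjoint_left.1 hH' hy ⟨x, hx, hxy⟩⟩

theorem exists_primePFilter_ge {α β γ : Type*} [DistribLattice α] [OrderBot α] [DistribLattice β]
    [OrderBot β] [SemilatticeSup γ] [OrderBot γ] {f : α → β → γ} (hf : IsBinaryOperator f)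
    {G : PFilter α} {H : PFilter β} {F : PrimePFilter γ} (hGH : ∀ x ∈ G, ∀ y ∈ H, f x y ∈ F.1) :
    ∃ (G' : PrimePFilter α) (H' : PrimePFilter β),
      G ≤ G'.1 ∧ H ≤ H'.1 ∧ ∀ x ∈ G'.1, ∀ y ∈ H'.1, f x y ∈ F.1 := by
  obtain ⟨G', hGG', hG'H⟩ :=
    hf.flip.exists_primePFilter_ge_right fun y hy x hx => hGH x hx y hy
  obtain ⟨H', hHH', hG'H'⟩ :=
    hf.exists_primePFilter_ge_right fun x hx y hy => hG'H y hy x hx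
  exact ⟨G', H', hGG', hHH', hG'H'⟩

end IsBinaryOperator

section LayeredHeytingAlgebra

variable {A : Type*} [LayeredHeytingAlgebra A]

theorem isBinaryOperator_lay : IsBinaryOperator (lay : A → A → A) :=
  .of_galoisConnection (fun b a c => lay_le_iff_limp a b c) (fun a b c => lay_le_iff_rimp a b c)

theorem IsPrimeFilter.isPFilter {F : Set A} (hF : IsPrimeFilter F) : IsPFilter F := by
  obtain ⟨nonempty, mem_of_le, inf_mem, -, -⟩ := hF
  exact .of_def nonempty
    (fun x hx y hy => ⟨x ⊓ y, inf_mem hx hy, inf_le_left, inf_le_right⟩)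
    (fun hxy hx => mem_of_le hx hxy)

theorem IsPrimeFilter.isIdeal_compl {F : Set A} (hF : IsPrimeFilter F) : IsIdeal Fᶜ := by
  obtain ⟨-, mem_of_le, -, bot_notMem, mem_or_mem⟩ := hF
  exact
    { IsLowerSet := fun x y hyx hx hy => hx (mem_of_le hy hyx)
      Nonempty := ⟨⊥, bot_notMem⟩
      Directed := fun x hx y hy =>
        ⟨x ⊔ y, fun hxy => (mem_or_mem x y hxy).elim hx hy, le_sup_left, le_sup_right⟩ }

/-- A prime filter of a layered Heyting algebra as a bundled Mathlib filter with the same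
elements. -/
def PF.toPrimePFilter (F : PF A) : PrimePFilter A :=
  ⟨F.2.isPFilter.toPFilter, ⟨F.2.isIdeal_compl⟩⟩

theorem PF.toPrimePFilter_surjective :
    Function.Surjective (PF.toPrimePFilter : PF A → PrimePFilter A) := fun F =>
  ⟨⟨F.1, F.1.nonempty, fun _ _ hx hxy => PFilter.mem_of_le hxy hx,
    fun _ _ hx hy => PFilter.inf_mem hx hy, F.bot_notMem, fun _ _ => F.mem_or_mem⟩, rfl⟩

end LayeredHeytingAlgebra

theorem hrep_lay_general {α β γ : Type*} [DistribLattice α] [OrderBot α] [DistribLattice β]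
    [OrderBot β] [SemilatticeSup γ] [OrderBot γ] {f : α → β → γ} (hf : IsBinaryOperator f)
    (a : α) (b : β) (F : PrimePFilter γ) :
    f a b ∈ F.1 ↔ ∃ (F' : PrimePFilter γ) (G : PrimePFilter α) (H : PrimePFilter β),
      F'.1 ≤ F.1 ∧ (∀ x ∈ G.1, ∀ y ∈ H.1, f x y ∈ F'.1) ∧ a ∈ G.1 ∧ b ∈ H.1 := by
  constructor
  · intro hab
    have principal_subset : ∀ x ∈ PFilter.principal a, ∀ y ∈ PFilter.principal b, f x y ∈ F.1 :=
      fun x hx y hy =>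
        PFilter.mem_of_le ((hf.monotone_left b hx).trans (hf.monotone_right x hy)) hab
    obtain ⟨G, H, haG, hbH, hGH⟩ := hf.exists_primePFilter_ge principal_subset
    exact ⟨F, G, H, le_rfl, hGH, PFilter.principal_le_iff.1 haG, PFilter.principal_le_iff.1 hbH⟩
  · rintro ⟨F', G, H, hF'F, hGH, ha, hb⟩
    exact hF'F (hGH a ha b hb)

theorem hrep_lay {A : Type*} [LayeredHeytingAlgebra A] (a b : A) :
    hrep (lay a b) =
      {F : PF A | ∃ F' G H : PF A, F'.val ⊆ F.val ∧ Rpf G H F' ∧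
        G ∈ hrep a ∧ H ∈ hrep b} := by
  ext F
  exact (hrep_lay_general isBinaryOperator_lay a b F.toPrimePFilter).trans
    PF.toPrimePFilter_surjective.exists₃
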